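/- arXiv:math/0306028 — 2 statements merged into one kernel-verified Lean document; each statement's English description precedes it below -/
import Mathlib

section
/- Let H be a Hopf algebra and A a left H-module. The map H ⊗ A → A ⊗ H given by h ⊗ a ↦ (h⁽¹⁾ ▷ a) ⊗ h⁽²⁾ (where ▷ is the module action and H acts on itself by the adjoint action) is H-equivariant, when H ⊗ A and A ⊗ H carry the tensor product H-module structures with H acting on the H-factor adjointly. -/
/-!
STATEMENT 1: For a Hopf algebra `H` and a left `H`-module `A`, the map
`H ⊗ A → A ⊗ H`, `h ⊗ a ↦ (h⁽¹⁾ ▷ a) ⊗ h⁽²⁾` is `H`-equivariant, where `H`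
acts on the `H`-factor of either tensor product by the adjoint action
`x ▷ a = x⁽¹⁾ a γ(x⁽²⁾)` and on the `A`-factor by the given module action,
the tensor products carrying the diagonal (coproduct) action.
-/

open TensorProduct LinearMap

noncomputable section

variable (k : Type*) [CommRing k]

/-- The "rotation" `(A ⊗ B) ⊗ C → (A ⊗ C) ⊗ B`. -/
def rot3 (A B C : Type*) [AddCommGroup A] [Module k A] [AddCommGroup B] [Module k B]
    [AddCommGroup C] [Module k C] :
    (A ⊗[k] B) ⊗[k] C →ₗ[k] (A ⊗[k] C) ⊗[k] B :=
  (TensorProduct.assoc k A C B).symm.toLinearMap ∘ₗ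
    (LinearMap.lTensor A (TensorProduct.comm k B C).toLinearMap) ∘ₗ
    (TensorProduct.assoc k A B C).toLinearMap

variable (H : Type*) [Ring H] [HopfAlgebra k H]

/-- The left adjoint action of a Hopf algebra on itself, `x ⊗ a ↦ x⁽¹⁾ a γ(x⁽²⁾)`,
as a linear map `H ⊗ H → H`. -/
def adjAction : H ⊗[k] H →ₗ[k] H :=
  (LinearMap.mul' k H) ∘ₗ
    (LinearMap.lTensor H ((LinearMap.mul' k H) ∘ₗ
      (LinearMap.lTensor H (HopfAlgebra.antipode (R := k))))) ∘ₗ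
    (LinearMap.lTensor H (TensorProduct.comm k H H).toLinearMap) ∘ₗ
    (TensorProduct.assoc k H H H).toLinearMap ∘ₗ
    (LinearMap.rTensor H (Coalgebra.comul (R := k)))

/-- The diagonal (tensor product) action of `H` on `B ⊗ C`, built from actions of `H`
on `B` and on `C` via the coproduct. -/
def tensorAction {B C : Type*} [AddCommGroup B] [Module k B] [AddCommGroup C] [Module k C]
    (actB : H ⊗[k] B →ₗ[k] B) (actC : H ⊗[k] C →ₗ[k] C) :
    H ⊗[k] (B ⊗[k] C) →ₗ[k] B ⊗[k] C :=
  (TensorProduct.map actB actC) ∘ₗ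
    (TensorProduct.tensorTensorTensorComm k H H B C).toLinearMap ∘ₗ
    (LinearMap.rTensor (B ⊗[k] C) (Coalgebra.comul (R := k)))

variable {k H}

section helpers
open Coalgebra HopfAlgebra WithConv

/-- `x ↦ x ⊗ 1`. -/
def inl1 (k H : Type*) [CommRing k] [Ring H] [HopfAlgebra k H] : H →ₗ[k] H ⊗[k] H :=
  (Algebra.TensorProduct.includeLeft : H →ₐ[k] H ⊗[k] H).toLinearMap

/-- `x ↦ 1 ⊗ x`. -/
def inr1 (k H : Type*) [CommRing k] [Ring H] [HopfAlgebra k H] : H →ₗ[k] H ⊗[k] H :=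
  (Algebra.TensorProduct.includeRight : H →ₐ[k] H ⊗[k] H).toLinearMap

theorem key1 : toConv (inl1 k H) * toConv (inr1 k H) = toConv (comul (R := k) (A := H)) := by
  ext x
  rw [(ℛ k x).convMul_apply]
  simp [inl1, inr1, (ℛ k x).eq]

theorem key2 (K : Type*) [Ring K] [Algebra k K] (f : H →ₐ[k] K) :
    toConv f.toLinearMap * toConv (f.toLinearMap ∘ₗ antipode k) = 1 := by
  have h := LinearMap.algHom_comp_convMul_distrib f (toConv (LinearMap.id (R := k) (M := H)))
    (toConv (antipode k))
  rw [LinearMap.id_mul_antipode] at h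
  apply WithConv.ofConv_injective
  refine Eq.trans h.symm ?_
  ext x
  simp [LinearMap.convOne_def]

theorem key3 (K : Type*) [Ring K] [Algebra k K] (f : H →ₐ[k] K) :
    toConv (f.toLinearMap ∘ₗ antipode k) * toConv f.toLinearMap = 1 := by
  have h := LinearMap.algHom_comp_convMul_distrib f (toConv (antipode k))
    (toConv (LinearMap.id (R := k) (M := H)))
  rw [LinearMap.antipode_mul_id] at h
  apply WithConv.ofConv_injective
  refine Eq.trans h.symm ?_
  ext x
  simp [LinearMap.convOne_def]

theorem key4 : toConv (comul ∘ₗ antipode k) * toConv (inl1 k H) =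
    toConv (inr1 k H ∘ₗ antipode k) := by
  have h2 : toConv (inr1 k H) * toConv (inr1 k H ∘ₗ antipode k) = 1 := key2 _ _
  have h3 : toConv (comul ∘ₗ antipode k) * toConv (comul (R := k) (A := H)) = 1 :=
    key3 _ (Bialgebra.comulAlgHom k H)
  rw [← key1] at h3
  calc _ = toConv (comul ∘ₗ antipode k) * toConv (inl1 k H) *
        (toConv (inr1 k H) * toConv (inr1 k H ∘ₗ antipode k)) := by rw [h2, mul_one]
    _ = _ := by rw [← mul_assoc, mul_assoc (toConv (comul ∘ₗ antipode k)), h3, one_mul]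

theorem mulLeft_conv (K : Type*) [Ring K] [Algebra k K] (d : K) (f g : H →ₗ[k] K) :
    toConv (LinearMap.mulLeft k d ∘ₗ f) * toConv g =
      toConv (LinearMap.mulLeft k d ∘ₗ (toConv f * toConv g).ofConv) := by
  ext x
  rw [(ℛ k x).convMul_apply]
  have := (ℛ k x).convMul_apply (toConv f) (toConv g)
  simp only [LinearMap.convMul_apply] at this
  simp [this, Finset.mul_sum, mul_assoc]

theorem key5 (d : H ⊗[k] H) :
    (toConv (comul (R := k) (A := H)) * toConv (LinearMap.mulLeft k d ∘ₗ comul ∘ₗ antipode k)) *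
      toConv (inl1 k H) =
    toConv (inl1 k H) * (toConv (inr1 k H) *
      toConv (LinearMap.mulLeft k d ∘ₗ inr1 k H ∘ₗ antipode k)) := by
  rw [mul_assoc, mulLeft_conv, key4, ← key1, mul_assoc]

theorem adj_apply (x h : H) : adjAction k H (x ⊗ₜ h) =
    ∑ i ∈ (ℛ k x).index, (ℛ k x).left i * (h * antipode k ((ℛ k x).right i)) := by
  simp [adjAction, ← (ℛ k x).eq, TensorProduct.sum_tmul]

theorem tens_apply {B C : Type*} [AddCommGroup B] [Module k B] [AddCommGroup C] [Module k C]
    (actB : H ⊗[k] B →ₗ[k] B) (actC : H ⊗[k] C →ₗ[k] C) (x : H) (b : B) (c : C) :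
    tensorAction k H actB actC (x ⊗ₜ (b ⊗ₜ c)) =
    ∑ i ∈ (ℛ k x).index, actB ((ℛ k x).left i ⊗ₜ b) ⊗ₜ actC ((ℛ k x).right i ⊗ₜ c) := by
  simp [tensorAction, ← (ℛ k x).eq, TensorProduct.sum_tmul]

/-- `p ⊗ q ↦ p a ⊗ q`. -/
def evA {A : Type*} [AddCommGroup A] [Module k A] (act : H ⊗[k] A →ₗ[k] A) (a : A) :
    H ⊗[k] H →ₗ[k] A ⊗[k] H :=
  LinearMap.rTensor H (act ∘ₗ (TensorProduct.mk k H A).flip a)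

theorem evA_apply {A : Type*} [AddCommGroup A] [Module k A] (act : H ⊗[k] A →ₗ[k] A) (a : A)
    (h : H) : (((LinearMap.rTensor H act) ∘ₗ (rot3 k H H A) ∘ₗ
        (LinearMap.rTensor A (Coalgebra.comul (R := k))))) (h ⊗ₜ a) = evA act a (comul h) := by
  simp [evA, rot3, ← (ℛ k h).eq, TensorProduct.sum_tmul]

theorem evA_inl {A : Type*} [AddCommGroup A] [Module k A] (act : H ⊗[k] A →ₗ[k] A)
    (act_mul : ∀ (x y : H) (a : A), act ((x * y) ⊗ₜ[k] a) = act (x ⊗ₜ[k] act (y ⊗ₜ[k] a)))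
    (a : A) (y : H) (t : H ⊗[k] H) :
    evA act (act (y ⊗ₜ a)) t = evA act a (t * inl1 k H y) := by
  induction t with
  | zero => simp
  | add s t hs ht => simp only [map_add, add_mul, hs, ht]
  | tmul p q => simp [evA, inl1, act_mul]

theorem rhs_aux {A : Type*} [AddCommGroup A] [Module k A] (act : H ⊗[k] A →ₗ[k] A)
    (act_mul : ∀ (x y : H) (a : A), act ((x * y) ⊗ₜ[k] a) = act (x ⊗ₜ[k] act (y ⊗ₜ[k] a)))
    (a : A) (x : H) (d : H ⊗[k] H) :
    tensorAction k H act (adjAction k H) (x ⊗ₜ evA act a d) =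
      evA act a ((toConv (inl1 k H) * (toConv (inr1 k H) *
      toConv (LinearMap.mulLeft k d ∘ₗ inr1 k H ∘ₗ antipode k))) x) := by
  rw [(ℛ k x).convMul_apply]
  simp_rw [(ℛ k _).convMul_apply]
  induction d with
  | zero => simp
  | add s t hs ht =>
    simp only [map_add, TensorProduct.tmul_add, hs, ht, ← Finset.sum_add_distrib]
    simp [add_mul, mul_add, Finset.sum_add_distrib]
  | tmul p q =>
    simp only [evA, LinearMap.rTensor_tmul, tens_apply, adj_apply]
    simp [inl1, inr1, act_mul, TensorProduct.tmul_sum, Finset.mul_sum]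

theorem lhs_aux {A : Type*} [AddCommGroup A] [Module k A] (act : H ⊗[k] A →ₗ[k] A)
    (act_mul : ∀ (x y : H) (a : A), act ((x * y) ⊗ₜ[k] a) = act (x ⊗ₜ[k] act (y ⊗ₜ[k] a)))
    (a : A) (x h : H) :
    ((LinearMap.rTensor H act) ∘ₗ (rot3 k H H A) ∘ₗ
        (LinearMap.rTensor A (Coalgebra.comul (R := k))))
      (tensorAction k H (adjAction k H) act (x ⊗ₜ (h ⊗ₜ a))) =
      evA act a (((toConv (comul (R := k) (A := H)) *
        toConv (LinearMap.mulLeft k (comul h) ∘ₗ comul ∘ₗ antipode k)) *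
      toConv (inl1 k H)) x) := by
  rw [(ℛ k x).convMul_apply]
  simp_rw [(ℛ k _).convMul_apply]
  rw [tens_apply, map_sum, map_sum]
  refine Finset.sum_congr rfl fun i _ => ?_
  rw [evA_apply, evA_inl act act_mul, adj_apply]
  simp

end helpers

theorem statement1 (A : Type*) [AddCommGroup A] [Module k A]
    (act : H ⊗[k] A →ₗ[k] A)
    -- `A` is a left `H`-module:
    (act_one : ∀ a : A, act ((1 : H) ⊗ₜ[k] a) = a)
    (act_mul : ∀ (x y : H) (a : A), act ((x * y) ⊗ₜ[k] a) = act (x ⊗ₜ[k] act (y ⊗ₜ[k] a))) :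
    -- the map `h ⊗ a ↦ (h⁽¹⁾ ▷ a) ⊗ h⁽²⁾` is `H`-equivariant:
    ((LinearMap.rTensor H act) ∘ₗ (rot3 k H H A) ∘ₗ
        (LinearMap.rTensor A (Coalgebra.comul (R := k)))) ∘ₗ
      (tensorAction k H (adjAction k H) act)
    = (tensorAction k H act (adjAction k H)) ∘ₗ
        (LinearMap.lTensor H ((LinearMap.rTensor H act) ∘ₗ (rot3 k H H A) ∘ₗ
          (LinearMap.rTensor A (Coalgebra.comul (R := k))))) := by
  apply TensorProduct.ext
  ext x : 1
  apply TensorProduct.ext'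
  intro h a
  have h1 := lhs_aux act act_mul a x h
  have h2 := rhs_aux act act_mul a x (Coalgebra.comul (R := k) h)
  rw [key5, ← h2, ← evA_apply] at h1
  exact h1

end
end

section
/- Let h be a finite-dimensional Lie bialgebra with double D(h) = h ⊕ h*_{op}, with dual bases {h^i} ⊂ h and {η^i} ⊂ h*_{op}, canonical r-matrix r = Σ_i η^i ∧ h^i and canonical invariant element θ = ½ Σ_i (η^i ⊗ h^i + h^i ⊗ η^i). Let L be a manifold with a D(h)-action on functions such that θ induces the zero bidifferential operator on A(L) (a Poisson base manifold). Then the bivector field ϖ := Σ_i η⃗^i ∧ h⃗^i on L equals Σ_i η⃗^i ⊗ h⃗^i and defines a Poisson bracket on L, which moreover makes L a Poisson–Lie D(h)-manifold. -/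
/-!
STATEMENT 15: Let `h` be a finite-dimensional Lie bialgebra with double
`D = D(h) = h ⊕ h*_{op}`, with dual bases `{h^i} ⊂ h`, `{η^i} ⊂ h*_{op}`, canonical
r-matrix `r = Σ η^i ∧ h^i` and canonical invariant element
`θ = ½ Σ (η^i ⊗ h^i + h^i ⊗ η^i)`.  Let `L` be a Poisson base manifold over `h`:
`D` acts on the (commutative) function algebra `A = A(L)` by derivations and `θ`
induces the zero bidifferential operator.  Then the bivector `ϖ = Σ η⃗^i ∧ h⃗^i`
equals `Σ η⃗^i ⊗ h⃗^i`, defines a Poisson bracket on `L`, and makes `L` a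
Poisson–Lie `D(h)`-manifold (the cocycle condition with respect to the cobracket
`μ(x) = ad_x r` holds).
-/

open TensorProduct

noncomputable section

theorem statement15
    -- the double `D = D(h)` of a finite-dimensional Lie bialgebra `h`:
    (D : Type*) [LieRing D] [LieAlgebra ℂ D] [FiniteDimensional ℂ D]
    (n : ℕ) (hb eb : Fin n → D)  -- the dual bases `{h^i}` and `{η^i}`
    -- the function algebra `A = A(L)` with the `D`-action by derivations:
    (A : Type*) [CommRing A] [Algebra ℂ A]
    (ρ : D →ₗ[ℂ] Module.End ℂ A)
    (hder : ∀ (x : D) (a b : A), ρ x (a * b) = a * ρ x b + b * ρ x a)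
    (hlie : ∀ x y : D, ρ ⁅x, y⁆ = ρ x ∘ₗ ρ y - ρ y ∘ₗ ρ x)
    -- decompositions of the r-matrix `r = Σ η^i ∧ h^i` and of `θ` into components:
    (m : ℕ) (ra rb θa θb : Fin m → D)
    (hrdef : ∑ i, (ra i) ⊗ₜ[ℂ] (rb i)
      = (2⁻¹ : ℂ) • ∑ i, ((eb i) ⊗ₜ[ℂ] (hb i) - (hb i) ⊗ₜ[ℂ] (eb i)))
    (hθdef : ∑ i, (θa i) ⊗ₜ[ℂ] (θb i)
      = (2⁻¹ : ℂ) • ∑ i, ((eb i) ⊗ₜ[ℂ] (hb i) + (hb i) ⊗ₜ[ℂ] (eb i)))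
    -- `θ` is ad-invariant:
    (hθinv : ∀ x : D,
      ∑ i, (⁅x, θa i⁆ ⊗ₜ[ℂ] (θb i) + (θa i) ⊗ₜ[ℂ] ⁅x, θb i⁆) = (0 : D ⊗[ℂ] D))
    -- the modified classical Yang–Baxter equation `[[r,r]] = [θ₁₂, θ₂₃]`:
    (hMYBE : (∑ i, ∑ j,
        ((⁅ra i, ra j⁆ ⊗ₜ[ℂ] (rb i)) ⊗ₜ[ℂ] (rb j)
          + ((ra i) ⊗ₜ[ℂ] ⁅rb i, ra j⁆) ⊗ₜ[ℂ] (rb j)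
          + ((ra i) ⊗ₜ[ℂ] (ra j)) ⊗ₜ[ℂ] ⁅rb i, rb j⁆))
      = ∑ i, ∑ j, ((θa i) ⊗ₜ[ℂ] ⁅θb i, θa j⁆) ⊗ₜ[ℂ] (θb j))
    -- `θ` induces the zero bidifferential operator on `A`:
    (hθzero : ∀ a b : A, ∑ i, (ρ (θa i) a) * (ρ (θb i) b) = 0) :
    -- conclusion, for the bracket `ϖ(a,b) = Σ (η⃗^i a)(h⃗^i b)`:
    ∀ pb : A → A → A, (∀ a b : A, pb a b = ∑ i, (ρ (eb i) a) * (ρ (hb i) b)) →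
      -- `ϖ = Σ η⃗^i ∧ h⃗^i` coincides with `Σ η⃗^i ⊗ h⃗^i`:
      (∀ a b : A, (2⁻¹ : ℂ) •
          (∑ i, ((ρ (eb i) a) * (ρ (hb i) b) - (ρ (hb i) a) * (ρ (eb i) b)))
        = pb a b) ∧
      -- `ϖ` is a Poisson bracket:
      (∀ a b : A, pb a b = - pb b a) ∧
      (∀ a b c : A, pb (a * b) c = a * pb b c + b * pb a c) ∧
      (∀ a b c : A, pb a (pb b c) + pb b (pb c a) + pb c (pb a b) = 0) ∧
      -- `L` is a Poisson–Lie `D(h)`-manifold: the cocycle condition with respect to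
      -- the cobracket `μ(x) = ad_x(r)` of the double:
      (∀ (x : D) (a b : A),
        ρ x (pb a b) - pb (ρ x a) b - pb a (ρ x b)
          = ∑ i, ((ρ ⁅x, ra i⁆ a) * (ρ (rb i) b) + (ρ (ra i) a) * (ρ ⁅x, rb i⁆ b))) := by
  intro pb hpb
  let B : A → A → (D ⊗[ℂ] D →ₗ[ℂ] A) := fun a b =>
    LinearMap.mul' ℂ A ∘ₗ TensorProduct.map (ρ.flip a) (ρ.flip b)
  have hB : ∀ a b x y, B a b (x ⊗ₜ[ℂ] y) = ρ x a * ρ y b := by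
    intro a b x y; simp [B]
  let T : A → A → A → ((D ⊗[ℂ] D) ⊗[ℂ] D →ₗ[ℂ] A) := fun a b c =>
    LinearMap.mul' ℂ A ∘ₗ TensorProduct.map (B a b) (ρ.flip c)
  have hT : ∀ a b c x y z, T a b c ((x ⊗ₜ[ℂ] y) ⊗ₜ[ℂ] z) = ρ x a * ρ y b * ρ z c := by
    intro a b c x y z; simp [T, hB]
  have hcancel : ∀ u v : A, (2⁻¹ : ℂ) • (u + v) = 0 → v = -u := by
    intro u v h
    have h2 : (2 : ℂ) • ((2⁻¹ : ℂ) • (u + v)) = 0 := by rw [h, smul_zero]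
    rw [smul_smul] at h2
    norm_num at h2
    exact (neg_eq_of_add_eq_zero_right h2).symm
  have hθ2 : ∀ a b : A, ∑ i, ρ (hb i) a * ρ (eb i) b = - pb a b := by
    intro a b
    have h := congrArg (B a b) hθdef
    simp only [map_sum, map_smul, map_add, hB, hθzero, Finset.sum_add_distrib] at h
    rw [hpb]
    exact hcancel _ _ h.symm
  have h1 : ∀ a b : A, (2⁻¹ : ℂ) •
          (∑ i, ((ρ (eb i) a) * (ρ (hb i) b) - (ρ (hb i) a) * (ρ (eb i) b)))
        = pb a b := by
    intro a b
    rw [Finset.sum_sub_distrib, hθ2, ← hpb, sub_neg_eq_add, ← two_smul ℂ, smul_smul]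
    norm_num
  have hr : ∀ a b : A, pb a b = ∑ i, ρ (ra i) a * ρ (rb i) b := by
    intro a b
    have h := congrArg (B a b) hrdef
    simp only [map_sum, map_smul, map_sub, hB] at h
    rw [h, h1]
  have hanti : ∀ a b : A, pb a b = - pb b a := by
    intro a b
    rw [← hθ2, hpb]
    exact Finset.sum_congr rfl fun i _ => mul_comm _ _
  have hL : ∀ a b c : A, pb (a * b) c = a * pb b c + b * pb a c := by
    intro a b c
    simp only [hr, hder, Finset.mul_sum, ← Finset.sum_add_distrib]
    exact Finset.sum_congr rfl fun i _ => by ring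
  have hR : ∀ a b c : A, pb a (b * c) = b * pb a c + c * pb a b := by
    intro a b c
    simp only [hr, hder, Finset.mul_sum, ← Finset.sum_add_distrib]
    exact Finset.sum_congr rfl fun i _ => by ring
  have hsumR : ∀ (a : A) (f : Fin m → A), pb a (∑ j, f j) = ∑ j, pb a (f j) := by
    intro a f
    simp only [hr, map_sum, Finset.mul_sum]
    exact Finset.sum_comm
  have hexp : ∀ a b c : A, pb a (pb b c)
      = ∑ j, ρ (ra j) b * pb a (ρ (rb j) c) + ∑ j, ρ (rb j) c * pb a (ρ (ra j) b) := by
    intro a b c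
    rw [hr b c, hsumR]
    simp only [hR, Finset.sum_add_distrib]
  refine ⟨h1, hanti, hL, ?_, ?_⟩
  · intro a b c
    have h := congrArg (T a b c) hMYBE
    simp only [map_sum, map_add, hT, hlie, LinearMap.sub_apply, LinearMap.comp_apply] at h
    have hz : ∑ i, ∑ j, ρ (θa i) a * (ρ (θb i) (ρ (θa j) b) - ρ (θa j) (ρ (θb i) b))
        * ρ (θb j) c = 0 := by
      have e1 : ∑ i, ∑ j, ρ (θa i) a * ρ (θb i) (ρ (θa j) b) * ρ (θb j) c = 0 := by
        rw [Finset.sum_comm]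
        refine Finset.sum_eq_zero fun j _ => ?_
        rw [← Finset.sum_mul, hθzero, zero_mul]
      have e2 : ∑ i, ∑ j, ρ (θa i) a * ρ (θa j) (ρ (θb i) b) * ρ (θb j) c = 0 := by
        refine Finset.sum_eq_zero fun i _ => ?_
        simp only [mul_assoc]
        rw [← Finset.mul_sum, hθzero, mul_zero]
      simp only [mul_sub, sub_mul, Finset.sum_sub_distrib, e1, e2, sub_zero]
    rw [hz] at h
    simp only [mul_sub, sub_mul, Finset.sum_add_distrib, Finset.sum_sub_distrib] at h
    have t1 : ∑ i, ∑ j, ρ (ra i) (ρ (ra j) a) * ρ (rb i) b * ρ (rb j) c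
        = - ∑ j, ρ (rb j) c * pb b (ρ (ra j) a) := by
      rw [Finset.sum_comm, ← Finset.sum_neg_distrib]
      refine Finset.sum_congr rfl fun j _ => ?_
      rw [← Finset.sum_mul, ← hr, hanti]; ring
    have t2 : ∑ i, ∑ j, ρ (ra j) (ρ (ra i) a) * ρ (rb i) b * ρ (rb j) c
        = - ∑ j, ρ (rb j) b * pb c (ρ (ra j) a) := by
      rw [← Finset.sum_neg_distrib]
      refine Finset.sum_congr rfl fun j _ => ?_
      rw [← mul_neg, ← hanti, hr, Finset.mul_sum]
      exact Finset.sum_congr rfl fun i _ => by ring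
    have t3 : ∑ i, ∑ j, ρ (ra i) a * ρ (rb i) (ρ (ra j) b) * ρ (rb j) c
        = ∑ j, ρ (rb j) c * pb a (ρ (ra j) b) := by
      rw [Finset.sum_comm]
      refine Finset.sum_congr rfl fun j _ => ?_
      rw [← Finset.sum_mul, ← hr]; ring
    have t4 : ∑ i, ∑ j, ρ (ra i) a * ρ (ra j) (ρ (rb i) b) * ρ (rb j) c
        = - ∑ j, ρ (ra j) a * pb c (ρ (rb j) b) := by
      rw [← Finset.sum_neg_distrib]
      refine Finset.sum_congr rfl fun j _ => ?_
      rw [← mul_neg, ← hanti, hr, Finset.mul_sum]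
      exact Finset.sum_congr rfl fun i _ => by ring
    have t5 : ∑ i, ∑ j, ρ (ra i) a * ρ (ra j) b * ρ (rb i) (ρ (rb j) c)
        = ∑ j, ρ (ra j) b * pb a (ρ (rb j) c) := by
      rw [Finset.sum_comm]
      refine Finset.sum_congr rfl fun j _ => ?_
      rw [hr, Finset.mul_sum]
      exact Finset.sum_congr rfl fun i _ => by ring
    have t6 : ∑ i, ∑ j, ρ (ra i) a * ρ (ra j) b * ρ (rb j) (ρ (rb i) c)
        = ∑ j, ρ (ra j) a * pb b (ρ (rb j) c) := by
      refine Finset.sum_congr rfl fun j _ => ?_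
      rw [hr, Finset.mul_sum]
      exact Finset.sum_congr rfl fun i _ => by ring
    rw [t1, t2, t3, t4, t5, t6] at h
    have hneg : pb b (pb c a) = - pb b (pb a c) := by
      rw [hanti c a, hr b (-_), hr b (pb a c)]
      simp only [map_neg, mul_neg, Finset.sum_neg_distrib]
    rw [hneg, hexp a b c, hexp b a c, hexp c a b]
    linear_combination h
  · intro x a b
    simp only [hr, map_sum, hder, hlie, LinearMap.sub_apply, LinearMap.comp_apply,
      ← Finset.sum_sub_distrib]
    exact Finset.sum_congr rfl fun i _ => by ring


end
end
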